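/- Let R be a commutative Noetherian local ring and let M be a finitely generated R-module such that for every totally reflexive R-module X one has Ext^j_R(X, M) = 0 for all j ≥ 1. Suppose there are finitely generated R-modules K_0 = M, K_1, …, K_r (r ≥ 1), positive integers a_1, …, a_r, b_1, …, b_r, n_1, …, n_r, and short exact sequences 0 → K_{i-1}^{⊕a_i} → K_i → Ω^{n_i} K_{i-1}^{⊕b_i} → 0 for each i = 1, …, r. Then for every totally reflexive R-module X one has Ext^j_R(X, K_i) = 0 for all j ≥ 1 and all i = 0, …, r. -/

import Mathlib

open CategoryTheory Pointwise

universe u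

variable (R : Type u) [CommRing R]

/-- `Ext^n_R(X, Y) = 0`. -/
def ExtVanish (X Y : Type u) [AddCommGroup X] [Module R X]
    [AddCommGroup Y] [Module R Y] (n : ℕ) : Prop :=
  Subsingleton (((Ext R (ModuleCat.{u} R) n).obj
    (Opposite.op (ModuleCat.of R X))).obj (ModuleCat.of R Y))

/-- A finitely generated module `X` is totally reflexive if the evaluation map to the
double dual is bijective and `Ext^i(X, R) = 0 = Ext^i(X^*, R)` for all `i ≥ 1`. -/
def IsTotallyReflexive (X : Type u) [AddCommGroup X] [Module R X] : Prop :=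
  Module.Finite R X ∧
  Function.Bijective (Module.Dual.eval R X) ∧
  (∀ i : ℕ, 1 ≤ i → ExtVanish R X R i) ∧
  (∀ i : ℕ, 1 ≤ i → ExtVanish R (Module.Dual R X) R i)

/-- `0 → A → B → C → 0` is a short exact sequence. -/
def IsShortExact {A B C : Type u} [AddCommGroup A] [Module R A] [AddCommGroup B] [Module R B]
    [AddCommGroup C] [Module R C] (f : A →ₗ[R] B) (g : B →ₗ[R] C) : Prop :=
  Function.Injective f ∧ Function.Surjective g ∧ Function.Exact f g

/-- Gorenstein dimension at most `n`: there is a resolution of length `≤ n`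
by totally reflexive modules. -/
def GdimLE : ℕ → ModuleCat.{u} R → Prop
  | 0, M => IsTotallyReflexive R M
  | n + 1, M => ∃ (X K : ModuleCat.{u} R) (f : K →ₗ[R] X) (g : X →ₗ[R] M),
      IsTotallyReflexive R X ∧ IsShortExact R f g ∧ GdimLE n K

/-- Projective dimension at most `n`. -/
def PdimLE : ℕ → ModuleCat.{u} R → Prop
  | 0, M => Module.Finite R M ∧ Module.Projective R M
  | n + 1, M => ∃ (X K : ModuleCat.{u} R) (f : K →ₗ[R] X) (g : X →ₗ[R] M),
      Module.Finite R X ∧ Module.Projective R X ∧ IsShortExact R f g ∧ PdimLE n K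

/-- Injective dimension at most `n`. -/
def InjdimLE : ℕ → ModuleCat.{u} R → Prop
  | 0, M => Module.Injective R M
  | n + 1, M => ∃ (I C : ModuleCat.{u} R) (f : M →ₗ[R] I) (g : I →ₗ[R] C),
      Module.Injective R I ∧ IsShortExact R f g ∧ InjdimLE n C

/-- The Gorenstein dimension, as an element of `ℕ∞`. -/
noncomputable def Gdim (M : ModuleCat.{u} R) : ℕ∞ :=
  sInf {n : ℕ∞ | ∃ m : ℕ, n = (m : ℕ∞) ∧ GdimLE R m M}

/-- The projective dimension, as an element of `ℕ∞`. -/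
noncomputable def Pdim (M : ModuleCat.{u} R) : ℕ∞ :=
  sInf {n : ℕ∞ | ∃ m : ℕ, n = (m : ℕ∞) ∧ PdimLE R m M}

/-- A local ring is Gorenstein if it has finite injective dimension over itself. -/
def IsGorensteinRing : Prop :=
  ∃ n : ℕ, InjdimLE R n (ModuleCat.of R R)

/-- `IsSyzygy R n S K` : `S` is an `n`-th syzygy of `K`, i.e. there is an exact sequence
`0 → S → F_{n-1} → ⋯ → F_0 → K → 0` with each `F_j` finitely generated free. -/
def IsSyzygy : ℕ → ModuleCat.{u} R → ModuleCat.{u} R → Prop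
  | 0, S, K => Nonempty (S ≃ₗ[R] K)
  | n + 1, S, K => ∃ (W F : ModuleCat.{u} R) (f : W →ₗ[R] F) (g : F →ₗ[R] K),
      Module.Free R F ∧ Module.Finite R F ∧ IsShortExact R f g ∧ IsSyzygy n S W

/-- One step in a reducing sequence: a short exact sequence
`0 → K^{⊕a} → L → (Ω^n K)^{⊕b} → 0`. -/
def ReducingStep (K L : ModuleCat.{u} R) (a b n : ℕ) : Prop :=
  ∃ (W : ModuleCat.{u} R) (f : (Fin a → K) →ₗ[R] L) (g : L →ₗ[R] (Fin b → W)),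
    IsSyzygy R n W K ∧ IsShortExact R f g

/-- `M` admits a reducing sequence `K_0 = M, K_1, …, K_r` relative to the property `P`,
that is, short exact sequences `0 → K_{i-1}^{⊕a_i} → K_i → (Ω^{n_i}K_{i-1})^{⊕b_i} → 0`
with `a_i, b_i, n_i ≥ 1` and `P (K_r)`. -/
def HasReducingSeq (P : ModuleCat.{u} R → Prop) (M : ModuleCat.{u} R) (r : ℕ) : Prop :=
  ∃ (K : Fin (r + 1) → ModuleCat.{u} R) (a b n : Fin r → ℕ),
    K 0 = M ∧ (∀ i, Module.Finite R (K i)) ∧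
    (∀ i : Fin r, 1 ≤ a i ∧ 1 ≤ b i ∧ 1 ≤ n i ∧
      ReducingStep R (K i.castSucc) (K i.succ) (a i) (b i) (n i)) ∧
    P (K (Fin.last r))

/-- The reducing invariant attached to the finiteness property `P`. -/
noncomputable def ReducingDim (P : ModuleCat.{u} R → Prop) (M : ModuleCat.{u} R) : ℕ∞ :=
  sInf {n : ℕ∞ | ∃ r : ℕ, n = (r : ℕ∞) ∧ HasReducingSeq R P M r}

/-- The reducing Gorenstein dimension. -/
noncomputable def rGdim (M : ModuleCat.{u} R) : ℕ∞ :=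
  ReducingDim R (fun N => ∃ m : ℕ, GdimLE R m N) M

/-- The reducing projective dimension. -/
noncomputable def rPdim (M : ModuleCat.{u} R) : ℕ∞ :=
  ReducingDim R (fun N => ∃ m : ℕ, PdimLE R m N) M

/-- depth of a module over a local ring: `inf { i | Ext^i(k, M) ≠ 0 }`. -/
noncomputable def depth [IsLocalRing R] (M : ModuleCat.{u} R) : ℕ∞ :=
  sInf {n : ℕ∞ | ∃ i : ℕ, n = (i : ℕ∞) ∧
    ¬ ExtVanish R (R ⧸ IsLocalRing.maximalIdeal R) M i}

/-- maximal Cohen-Macaulay: depth equals the Krull dimension of the ring. -/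
def IsMCM [IsLocalRing R] (M : ModuleCat.{u} R) : Prop :=
  (depth R M : WithBot ℕ∞) = ringKrullDim R

/-- torsion-free: every non zero-divisor of `R` is a non zero-divisor on `M`. -/
def IsTorsionFreeModule (M : Type u) [AddCommGroup M] [Module R M] : Prop :=
  ∀ r ∈ nonZeroDivisors R, ∀ m : M, r • m = 0 → m = 0

theorem bridge (X Y : Type u) [AddCommGroup X] [Module R X]
    [AddCommGroup Y] [Module R Y] (n : ℕ) :
    ExtVanish R X Y (n+1) ↔ Subsingleton (Abelian.Ext.{u} (ModuleCat.of R X) (ModuleCat.of R Y) (n+1)) := by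
  let P := projectiveResolution (ModuleCat.of R X)
  unfold ExtVanish
  rw [← ModuleCat.isZero_iff_subsingleton, (P.isoExt (n+1) _).isZero_iff,
    ← HomologicalComplex.exactAt_iff_isZero_homology,
    HomologicalComplex.exactAt_iff' _ n (n+1) (n+2) (by simp) (by simp),
    ShortComplex.moduleCat_exact_iff]
  constructor
  · intro h
    refine subsingleton_of_forall_eq 0 fun α => ?_
    obtain ⟨f, hf, rfl⟩ := P.extMk_surjective α (n+2) rfl
    rw [P.extMk_eq_zero_iff _ _ _ _ n rfl]
    exact h f hf
  · intro h f hf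
    exact (P.extMk_eq_zero_iff f (n+2) rfl hf n rfl).1 (Subsingleton.elim _ _)

section
variable {R}

/-- Derived-category version of Ext vanishing. -/
def EV (X Y : Type u) [AddCommGroup X] [Module R X]
    [AddCommGroup Y] [Module R Y] (n : ℕ) : Prop :=
  Subsingleton (Abelian.Ext.{u} (ModuleCat.of R X) (ModuleCat.of R Y) n)

variable {X Y A B C : Type u} [AddCommGroup X] [Module R X] [AddCommGroup Y] [Module R Y]
  [AddCommGroup A] [Module R A] [AddCommGroup B] [Module R B] [AddCommGroup C] [Module R C]

theorem EV.of_sum {ι : Type*} [Fintype ι] {n : ℕ} (h : EV (R := R) X A n)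
    (p : ι → (B →ₗ[R] A)) (s : ι → (A →ₗ[R] B)) (hps : ∀ x, ∑ i, s i (p i x) = x) :
    EV (R := R) X B n := by
  refine subsingleton_of_forall_eq 0 fun α => ?_
  have h1 : 𝟙 (ModuleCat.of R B) = ∑ i, ModuleCat.ofHom (p i) ≫ ModuleCat.ofHom (s i) := by
    ext x
    simp [ModuleCat.hom_sum, LinearMap.sum_apply, hps]
  rw [← α.comp_mk₀_id, h1, Abelian.Ext.mk₀_sum, Abelian.Ext.comp_sum]
  refine Finset.sum_eq_zero fun i _ => ?_
  have h2 : α.comp (Abelian.Ext.mk₀ (ModuleCat.ofHom (p i))) (add_zero n) = 0 :=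
    @Subsingleton.elim _ h _ _
  rw [← Abelian.Ext.mk₀_comp_mk₀, ← Abelian.Ext.comp_assoc_of_second_deg_zero, h2,
    Abelian.Ext.zero_comp]

/-- The associated short complex. -/
abbrev sesC {f : A →ₗ[R] B} {g : B →ₗ[R] C} (h : IsShortExact R f g) :
    ShortComplex (ModuleCat.{u} R) :=
  ShortComplex.mk (ModuleCat.ofHom f) (ModuleCat.ofHom g) (by
    ext x
    exact h.2.2.apply_apply_eq_zero x)

theorem sesE {f : A →ₗ[R] B} {g : B →ₗ[R] C} (h : IsShortExact R f g) : (sesC h).ShortExact where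
  exact := (ShortComplex.ShortExact.moduleCat_exact_iff_function_exact _).2 h.2.2
  mono_f := (ModuleCat.mono_iff_injective _).2 h.1
  epi_g := (ModuleCat.epi_iff_surjective _).2 h.2.1

theorem cov_mid {f : A →ₗ[R] B} {g : B →ₗ[R] C} (h : IsShortExact R f g) {n : ℕ}
    (hA : EV (R := R) X A n) (hC : EV (R := R) X C n) : EV (R := R) X B n := by
  refine subsingleton_of_forall_eq 0 fun α => ?_
  obtain ⟨β, hβ⟩ := Abelian.Ext.covariant_sequence_exact₂ _ (sesE h) α (@Subsingleton.elim _ hC _ _)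
  rw [← hβ, @Subsingleton.elim _ hA β 0, Abelian.Ext.zero_comp]

theorem cov_left {f : A →ₗ[R] B} {g : B →ₗ[R] C} (h : IsShortExact R f g) {n : ℕ}
    (hC : EV (R := R) X C n) (hB : EV (R := R) X B (n+1)) : EV (R := R) X A (n+1) := by
  refine subsingleton_of_forall_eq 0 fun α => ?_
  obtain ⟨β, hβ⟩ := Abelian.Ext.covariant_sequence_exact₁ _ (sesE h) α
    (@Subsingleton.elim _ hB _ _) rfl
  rw [← hβ, @Subsingleton.elim _ hC β 0, Abelian.Ext.zero_comp]

theorem con_left {f : A →ₗ[R] B} {g : B →ₗ[R] C} (h : IsShortExact R f g) {n : ℕ}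
    (hB : EV (R := R) B Y n) (hC : EV (R := R) C Y (n+1)) : EV (R := R) A Y n := by
  refine subsingleton_of_forall_eq 0 fun α => ?_
  obtain ⟨β, hβ⟩ := Abelian.Ext.contravariant_sequence_exact₁ (sesE h) _ α (add_comm 1 n)
    (@Subsingleton.elim _ hC _ _)
  rw [← hβ, @Subsingleton.elim _ hB β 0, Abelian.Ext.comp_zero]

theorem con_right {f : A →ₗ[R] B} {g : B →ₗ[R] C} (h : IsShortExact R f g) {n : ℕ}
    (hA : EV (R := R) A Y n) (hB : EV (R := R) B Y (n+1)) : EV (R := R) C Y (n+1) := by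
  refine subsingleton_of_forall_eq 0 fun α => ?_
  obtain ⟨β, hβ⟩ := Abelian.Ext.contravariant_sequence_exact₃ (sesE h) _ α
    (@Subsingleton.elim _ hB _ _) (add_comm 1 n)
  rw [← hβ, @Subsingleton.elim _ hA β 0, Abelian.Ext.comp_zero]

theorem con_right0 {f : A →ₗ[R] B} {g : B →ₗ[R] C} (h : IsShortExact R f g)
    (hA : ∀ φ : A →ₗ[R] Y, ∃ ψ : B →ₗ[R] Y, ψ ∘ₗ f = φ)
    (hB : EV (R := R) B Y 1) : EV (R := R) C Y 1 := by
  refine subsingleton_of_forall_eq 0 fun α => ?_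
  obtain ⟨β, hβ⟩ := Abelian.Ext.contravariant_sequence_exact₃ (sesE h) _ α
    (@Subsingleton.elim _ hB _ _) (add_zero 1)
  obtain ⟨b, rfl⟩ := Abelian.Ext.mk₀_bijective _ _ |>.2 β
  obtain ⟨ψ, hψ⟩ := hA b.hom
  have : b = (sesC h).f ≫ ModuleCat.ofHom ψ := by
    ext x; exact (LinearMap.congr_fun hψ x).symm
  rw [← hβ, this, ← Abelian.Ext.mk₀_comp_mk₀]
  rw [← Abelian.Ext.comp_assoc_of_second_deg_zero, (sesE h).extClass_comp,
    Abelian.Ext.zero_comp]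

theorem con_hom {f : A →ₗ[R] B} {g : B →ₗ[R] C} (h : IsShortExact R f g)
    (hC : EV (R := R) C Y 1) (φ : A →ₗ[R] Y) : ∃ ψ : B →ₗ[R] Y, ψ ∘ₗ f = φ := by
  obtain ⟨β, hβ⟩ := Abelian.Ext.contravariant_sequence_exact₁ (sesE h) _
    (Abelian.Ext.mk₀ (ModuleCat.ofHom φ)) (add_zero 1) (@Subsingleton.elim _ hC _ _)
  obtain ⟨b, rfl⟩ := Abelian.Ext.mk₀_bijective _ _ |>.2 β
  rw [Abelian.Ext.mk₀_comp_mk₀] at hβ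
  have := (Abelian.Ext.mk₀_bijective _ _).1 hβ
  exact ⟨b.hom, congrArg ModuleCat.Hom.hom this⟩

theorem EV.proj [Module.Projective R X] (n : ℕ) : EV (R := R) X Y (n+1) :=
  have : Projective (ModuleCat.of R X) := (IsProjective.iff_projective _).1 ‹_›
  Abelian.Ext.subsingleton_of_projective _ _ _

theorem EV.free [Module.Free R B] [Module.Finite R B] {n : ℕ} (h : EV (R := R) X R n) :
    EV (R := R) X B n := by
  let b := Module.Free.chooseBasis R B
  exact h.of_sum (fun i => b.coord i) (fun i => LinearMap.toSpanSingleton R B (b i))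
    (fun x => by simpa using b.sum_repr x)

/-- total reflexivity in terms of `EV`. -/
theorem tr_iff : IsTotallyReflexive R X ↔ Module.Finite R X ∧
  Function.Bijective (Module.Dual.eval R X) ∧
  (∀ i : ℕ, EV (R := R) X R (i+1)) ∧
  (∀ i : ℕ, EV (R := R) (Module.Dual R X) R (i+1)) := by
  unfold IsTotallyReflexive
  refine and_congr Iff.rfl (and_congr Iff.rfl (and_congr ?_ ?_))
  · exact ⟨fun h i => (bridge R _ _ _).1 (h (i+1) (by omega)), fun h i hi => by
      obtain ⟨i, rfl⟩ := Nat.exists_eq_add_of_le' hi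
      exact (bridge R _ _ _).2 (h i)⟩
  · exact ⟨fun h i => (bridge R _ _ _).1 (h (i+1) (by omega)), fun h i hi => by
      obtain ⟨i, rfl⟩ := Nat.exists_eq_add_of_le' hi
      exact (bridge R _ _ _).2 (h i)⟩

theorem cosyz [IsNoetherianRing R] (hX : IsTotallyReflexive R X) :
    ∃ (G : Type u) (_ : AddCommGroup G) (_ : Module R G) (Y : Type u) (_ : AddCommGroup Y)
      (_ : Module R Y) (f : X →ₗ[R] G) (g : G →ₗ[R] Y), Module.Projective R G ∧
      IsShortExact R f g ∧ IsTotallyReflexive R Y := by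
  rw [tr_iff] at hX
  obtain ⟨hfin, hrefl, hE, hE'⟩ := hX
  have : Module.Finite R (Module.Dual R X) := inferInstance
  obtain ⟨m, π, hπ⟩ := Module.Finite.exists_fin' R (Module.Dual R X)
  let G := Module.Dual R (Fin m → R)
  let f : X →ₗ[R] G := π.dualMap ∘ₗ Module.Dual.eval R X
  have hfa : ∀ x φ, f x φ = π φ x := fun x φ => rfl
  have hf : Function.Injective f :=
    (LinearMap.dualMap_injective_of_surjective hπ).comp hrefl.1
  let g := (LinearMap.range f).mkQ
  have hgs : Function.Surjective g := Submodule.mkQ_surjective _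
  have hfg : Function.Exact f g := LinearMap.exact_map_mkQ_range f
  have hses : IsShortExact R f g := ⟨hf, hgs, hfg⟩
  have hfd : Function.Surjective f.dualMap := by
    intro ξ
    obtain ⟨φ, rfl⟩ := hπ ξ
    exact ⟨Module.Dual.eval R _ φ, by ext x; exact hfa x φ⟩
  have hgd : Function.Injective g.dualMap := LinearMap.dualMap_injective_of_surjective hgs
  have hd : IsShortExact R g.dualMap f.dualMap := by
    refine ⟨hgd, hfd, fun ψ => ⟨fun h => ?_, ?_⟩⟩
    · refine ⟨(LinearMap.range f).liftQ ψ ?_, ?_⟩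
      · rintro _ ⟨x, rfl⟩
        exact LinearMap.congr_fun h x
      · ext x; rfl
    · rintro ⟨η, rfl⟩
      ext x
      change η (g (f x)) = 0
      rw [hfg.apply_apply_eq_zero, map_zero]
  have hG : Function.Bijective (Module.Dual.eval R G) := Module.bijective_dual_eval R G
  refine ⟨G, inferInstance, inferInstance, G ⧸ LinearMap.range f, inferInstance, inferInstance,
    f, g, inferInstance, hses, tr_iff.2 ⟨inferInstance, ⟨?_, ?_⟩, ?_, ?_⟩⟩
  · rw [injective_iff_map_eq_zero]
    intro y hy
    obtain ⟨γ, rfl⟩ := hgs y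
    have h1 : LinearMap.ker f.dualMap ≤ LinearMap.ker (Module.Dual.eval R G γ) := by
      intro ψ hψ
      obtain ⟨η, rfl⟩ := (hd.2.2 ψ).1 hψ
      exact LinearMap.congr_fun hy η
    obtain ⟨x'', hx''⟩ : ∃ x'' : Module.Dual R X →ₗ[R] R,
        ∀ ψ, x'' (f.dualMap ψ) = Module.Dual.eval R G γ ψ := by
      refine ⟨(LinearMap.ker f.dualMap).liftQ _ h1 ∘ₗ
        (f.dualMap.quotKerEquivOfSurjective hfd).symm.toLinearMap, fun ψ => ?_⟩
      have : (f.dualMap.quotKerEquivOfSurjective hfd).symm (f.dualMap ψ)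
          = (LinearMap.ker f.dualMap).mkQ ψ := by
        rw [LinearEquiv.symm_apply_eq]; rfl
      simp only [LinearMap.comp_apply, LinearEquiv.coe_coe, this]
      rfl
    obtain ⟨x, rfl⟩ := hrefl.2 x''
    have : f x = γ := hG.1 (by ext ψ; exact hx'' ψ)
    rw [← this, hfg.apply_apply_eq_zero]
  · intro y''
    obtain ⟨ψ, hψ⟩ := con_hom hd (hE' 0) y''
    obtain ⟨γ, rfl⟩ := hG.2 ψ
    exact ⟨g γ, by ext η; exact LinearMap.congr_fun hψ η⟩
  · intro i
    cases i with
    | zero => exact con_right0 hses (fun φ => hfd φ) (EV.proj 0)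
    | succ i => exact con_right hses (hE i) (EV.proj _)
  · intro i
    exact con_left hd (EV.proj _) (hE' _)

theorem syz_step [IsNoetherianRing R] {f : A →ₗ[R] B} {g : B →ₗ[R] C} (h : IsShortExact R f g)
    [Module.Free R B] [Module.Finite R B]
    (hC : ∀ X : ModuleCat.{u} R, IsTotallyReflexive R X → ∀ j, EV (R := R) X C (j+1))
    (X : ModuleCat.{u} R) (hX : IsTotallyReflexive R X) (j : ℕ) : EV (R := R) X A (j+1) := by
  have key : ∀ X : ModuleCat.{u} R, IsTotallyReflexive R X → ∀ j, EV (R := R) X A (j+2) :=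
    fun X hX j => cov_left h (hC X hX j) (EV.free ((tr_iff.1 hX).2.2.1 (j+1)))
  obtain ⟨G, _, _, Y, _, _, f', g', hG, hs, hY⟩ := cosyz hX
  exact con_left hs (EV.proj _) (key (ModuleCat.of R Y) hY j)

theorem syz [IsNoetherianRing R] (n : ℕ) : ∀ (S K : ModuleCat.{u} R), IsSyzygy R n S K →
    (∀ X : ModuleCat.{u} R, IsTotallyReflexive R X → ∀ j, EV (R := R) X K (j+1)) →
    ∀ X : ModuleCat.{u} R, IsTotallyReflexive R X → ∀ j, EV (R := R) X S (j+1) := by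
  induction n with
  | zero =>
    rintro S K ⟨e⟩ h X hX j
    exact (h X hX j).of_sum (ι := Unit) (fun _ => e.toLinearMap) (fun _ => e.symm.toLinearMap)
      (by simp)
  | succ n ih =>
    rintro S K ⟨W, F, f, g, _, _, hs, hW⟩ h
    exact ih S W hW (syz_step hs h)

theorem EV.pi {n m : ℕ} (h : EV (R := R) X A n) : EV (R := R) X (Fin m → A) n :=
  h.of_sum (fun i => LinearMap.proj i) (fun i => LinearMap.single R (fun _ => A) i)
    (fun x => by simpa using Finset.univ_sum_single x)

end

theorem stmt10 (R : Type u) [CommRing R] [IsNoetherianRing R] [IsLocalRing R]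
    (r : ℕ) (hr : 1 ≤ r) (K : Fin (r + 1) → ModuleCat.{u} R)
    (hfin : ∀ i, Module.Finite R (K i))
    (a b n : Fin r → ℕ) (habn : ∀ i, 1 ≤ a i ∧ 1 ≤ b i ∧ 1 ≤ n i)
    (hseq : ∀ i : Fin r, ReducingStep R (K i.castSucc) (K i.succ) (a i) (b i) (n i))
    (hext : ∀ X : ModuleCat.{u} R, IsTotallyReflexive R X →
      ∀ j : ℕ, 1 ≤ j → ExtVanish R X (K 0) j) :
    ∀ X : ModuleCat.{u} R, IsTotallyReflexive R X →
      ∀ j : ℕ, 1 ≤ j → ∀ i : Fin (r + 1), ExtVanish R X (K i) j := by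
  have main : ∀ i : Fin (r + 1), ∀ X : ModuleCat.{u} R, IsTotallyReflexive R X →
      ∀ j : ℕ, EV (R := R) X (K i) (j+1) := by
    intro i
    induction i using Fin.induction with
    | zero => exact fun X hX j => (bridge R _ _ _).1 (hext X hX (j+1) (by omega))
    | succ i ih =>
      intro X hX j
      obtain ⟨W, f, g, hW, hs⟩ := hseq i
      exact cov_mid hs (ih X hX j).pi (syz _ _ _ hW ih X hX j).pi
  intro X hX j hj i
  obtain ⟨j, rfl⟩ := Nat.exists_eq_add_of_le' hj
  exact (bridge R _ _ _).2 (main i X hX j)
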